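/- arXiv:2407.20869 — 5 statements merged into one kernel-verified Lean document; each statement's English description precedes it below -/
import Mathlib

section
/- Let A, γ, k, η, β be real constants with η ≠ k, let t ∈ ℝ, and let H, G : ℝ × ℝ → ℝ² be given on {v > 0} by H(v,w) = (v, v(w+β/(η−k))) and G(v,w) = (v e^{(η−k)t}(w+β/(η−k)) − vβ/(η−k) − A v^{γ+1} e^{k(γ+1)t} e^{(η−k)t}, v(w+β/(η−k))² e^{(η−k)t} − (w+β/(η−k)) e^{(η−k)t} A v^{γ+1} e^{k(γ+1)t} − (β/(η−k))(w+β/(η−k))v). Then at every point (v,w) with v > 0, the Jacobian matrices DH and DG of H and G satisfy det(DG − λ₁ DH) = 0 and det(DG − λ₂ DH) = 0, and moreover (DG − λ₁ DH)·(1,0)ᵀ = 0 and (DG − λ₂ DH)·(1, Aγ v^{γ−1} e^{k(γ+1)t})ᵀ = 0, where λ₁ = λ₁(v,w,t) and λ₂ = λ₂(v,w,t). -/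
/-!
Write `c = β / (η - k)`, `u = w + c`, `e = exp ((η - k) t)`, `E = exp (k (γ + 1) t)`. The flux is a
scalar multiple of the conserved quantity, `G = λ₂ H`, so `DG - λ₂ DH` is the rank-one matrix
`H ⊗ ∇λ₂` with `∇λ₂ = e (-A γ v ^ (γ - 1) E, 1)`, which annihilates `(1, A γ v ^ (γ - 1) E)`.
Moreover `λ₁ = λ₂ + v ∂λ₂/∂v` and `H = v ∂H/∂v`, so `(1, 0)` is annihilated by `DG - λ₁ DH`.
Both determinants vanish because the kernels are nontrivial.

The entries of `DH` and `DG` are identified by uniqueness of one-variable derivatives along the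
coordinate lines (`hasDerivAt_fst_of_jacobian`, `hasDerivAt_snd_of_jacobian`). The powers of `v` are
reduced to `P = v ^ (γ - 1)` through `v ^ γ = P v` and `v ^ (γ + 1) = P v ^ 2`, after which the
eigenvector identities are polynomial.
-/

/-- Conserved quantity H of the transformed system (case η ≠ k), on states p = (v, w). -/
noncomputable def Hmap (β η k : ℝ) (p : Fin 2 → ℝ) : Fin 2 → ℝ :=
  ![p 0, p 0 * (p 1 + β / (η - k))]

/-- Flux G of the transformed system (case η ≠ k) at time t, on states p = (v, w). -/
noncomputable def Gmap (A γ k η β t : ℝ) (p : Fin 2 → ℝ) : Fin 2 → ℝ :=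
  ![p 0 * Real.exp ((η - k) * t) * (p 1 + β / (η - k)) - p 0 * β / (η - k)
      - A * p 0 ^ (γ + 1) * Real.exp (k * (γ + 1) * t) * Real.exp ((η - k) * t),
    p 0 * (p 1 + β / (η - k)) ^ (2 : ℕ) * Real.exp ((η - k) * t)
      - (p 1 + β / (η - k)) * Real.exp ((η - k) * t) * A * p 0 ^ (γ + 1)
          * Real.exp (k * (γ + 1) * t)
      - (β / (η - k)) * (p 1 + β / (η - k)) * p 0]

/-- The first column of a Jacobian matrix consists of the derivatives along the line `s ↦ (s, w)`. -/
lemma hasDerivAt_fst_of_jacobian {F : (Fin 2 → ℝ) → Fin 2 → ℝ} {M : Matrix (Fin 2) (Fin 2) ℝ}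
    {v w : ℝ} (h : HasFDerivAt F (LinearMap.toContinuousLinearMap M.mulVecLin) ![v, w])
    (i : Fin 2) : HasDerivAt (fun s => F ![s, w] i) (M i 0) v := by
  have hc : HasDerivAt (fun s : ℝ => (![s, w] : Fin 2 → ℝ)) ![1, 0] v := by
    rw [hasDerivAt_pi]
    intro j
    fin_cases j
    · exact hasDerivAt_id v
    · exact hasDerivAt_const v w
  have h2 := hasDerivAt_pi.1 (HasFDerivAt.comp_hasDerivAt v h hc) i
  simpa [Matrix.mulVec, dotProduct, Fin.sum_univ_two] using h2

/-- The second column of a Jacobian matrix consists of the derivatives along the line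
`s ↦ (v, s)`. -/
lemma hasDerivAt_snd_of_jacobian {F : (Fin 2 → ℝ) → Fin 2 → ℝ} {M : Matrix (Fin 2) (Fin 2) ℝ}
    {v w : ℝ} (h : HasFDerivAt F (LinearMap.toContinuousLinearMap M.mulVecLin) ![v, w])
    (i : Fin 2) : HasDerivAt (fun s => F ![v, s] i) (M i 1) w := by
  have hc : HasDerivAt (fun s : ℝ => (![v, s] : Fin 2 → ℝ)) ![0, 1] w := by
    rw [hasDerivAt_pi]
    intro j
    fin_cases j
    · exact hasDerivAt_const w v
    · exact hasDerivAt_id w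
  have h2 := hasDerivAt_pi.1 (HasFDerivAt.comp_hasDerivAt w h hc) i
  simpa [Matrix.mulVec, dotProduct, Fin.sum_univ_two] using h2

/-- at every point with v > 0, the Jacobian matrices DH and DG of H and G
satisfy det(DG − λᵢ DH) = 0 for i = 1,2, with eigenvectors (1,0)ᵀ for λ₁ and
(1, Aγ v^{γ−1} e^{k(γ+1)t})ᵀ for λ₂. -/
theorem jacobian_eigenstructure_eta_ne_k
    (A γ k η β t : ℝ) (hηk : η ≠ k) (v w : ℝ) (hv : 0 < v)
    (lam1 lam2 : ℝ)
    (hlam1 : lam1 = -β / (η - k) +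
      (w + β / (η - k) - A * (γ + 1) * v ^ γ * Real.exp (k * (γ + 1) * t)) *
        Real.exp ((η - k) * t))
    (hlam2 : lam2 = -β / (η - k) +
      (w + β / (η - k) - A * v ^ γ * Real.exp (k * (γ + 1) * t)) *
        Real.exp ((η - k) * t))
    (DH DG : Matrix (Fin 2) (Fin 2) ℝ)
    (hDH : HasFDerivAt (Hmap β η k)
      (LinearMap.toContinuousLinearMap DH.mulVecLin) ![v, w])
    (hDG : HasFDerivAt (Gmap A γ k η β t)
      (LinearMap.toContinuousLinearMap DG.mulVecLin) ![v, w]) :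
    (DG - lam1 • DH).det = 0 ∧ (DG - lam2 • DH).det = 0 ∧
    (DG - lam1 • DH).mulVec ![1, 0] = 0 ∧
    (DG - lam2 • DH).mulVec ![1, A * γ * v ^ (γ - 1) * Real.exp (k * (γ + 1) * t)] = 0 := by
  have hP1 : v ^ γ = v ^ (γ - 1) * v := by
    rw [← Real.rpow_add_one hv.ne']; congr 1; ring
  have hP2 : v ^ (γ + 1) = v ^ (γ - 1) * v * v := by
    rw [Real.rpow_add_one hv.ne', hP1]
  have hpow : HasDerivAt (fun s : ℝ => s ^ (γ + 1)) ((γ + 1) * v ^ γ) v := by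
    simpa using Real.hasDerivAt_rpow_const (p := γ + 1) (Or.inl hv.ne')
  have hH00 := hasDerivAt_fst_of_jacobian hDH 0
  have hH10 := hasDerivAt_fst_of_jacobian hDH 1
  have hH01 := hasDerivAt_snd_of_jacobian hDH 0
  have hH11 := hasDerivAt_snd_of_jacobian hDH 1
  have hG00 := hasDerivAt_fst_of_jacobian hDG 0
  have hG10 := hasDerivAt_fst_of_jacobian hDG 1
  have hG01 := hasDerivAt_snd_of_jacobian hDG 0
  have hG11 := hasDerivAt_snd_of_jacobian hDG 1
  simp only [Hmap, Gmap, Matrix.cons_val_zero, Matrix.cons_val_one, mul_div_assoc]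
    at hH00 hH10 hH01 hH11 hG00 hG10 hG01 hG11
  rw [neg_div] at hlam1 hlam2
  generalize β / (η - k) = c at *
  generalize Real.exp ((η - k) * t) = e at *
  generalize Real.exp (k * (γ + 1) * t) = E at *
  have idv := hasDerivAt_id' v
  have idw := (hasDerivAt_id' w).add_const c
  have eH00 := hH00.unique idv
  have eH10 := hH10.unique (idv.mul_const (w + c))
  have eH01 := hH01.unique (hasDerivAt_const w v)
  have eH11 := hH11.unique (idw.const_mul v)
  have eG00 := hG00.unique ((((idv.mul_const e).mul_const (w + c)).sub (idv.mul_const c)).sub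
    (((hpow.const_mul A).mul_const E).mul_const e))
  have eG10 := hG10.unique ((((idv.mul_const ((w + c) ^ 2)).mul_const e).sub
    ((hpow.const_mul ((w + c) * e * A)).mul_const E)).sub (idv.const_mul (c * (w + c))))
  have eG01 := hG01.unique (((idw.const_mul (v * e)).sub_const (v * c)).sub_const
    (A * v ^ (γ + 1) * E * e))
  have eG11 := hG11.unique (((((idw.pow 2).const_mul v).mul_const e).sub
    ((((idw.mul_const e).mul_const A).mul_const (v ^ (γ + 1))).mul_const E)).sub
    ((idw.const_mul c).mul_const v))
  rw [hP1] at hlam1 hlam2 eG00 eG10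
  rw [hP2] at eG11
  generalize v ^ (γ - 1) = P at *
  have k1 : (DG - lam1 • DH).mulVec ![1, 0] = 0 := by
    ext i
    fin_cases i <;>
      simp [Matrix.mulVec, dotProduct, Fin.sum_univ_two, eH00, eH10, eG00, eG10, hlam1] <;> ring
  have k2 : (DG - lam2 • DH).mulVec ![1, A * γ * P * E] = 0 := by
    ext i
    fin_cases i <;>
      simp [Matrix.mulVec, dotProduct, Fin.sum_univ_two, eH00, eH10, eG00, eG10, eH01, eH11,
        eG01, eG11, hlam2] <;> ring
  refine ⟨?_, ?_, k1, k2⟩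
  · exact Matrix.exists_mulVec_eq_zero_iff.1 ⟨_, fun h => one_ne_zero (congrFun h 0), k1⟩
  · exact Matrix.exists_mulVec_eq_zero_iff.1 ⟨_, fun h => one_ne_zero (congrFun h 0), k2⟩
end

section
/- Let A, γ, k, η, β be real constants with A < 0, γ < 0, γ ≠ −1 and η ≠ k, and fix t ∈ ℝ. Then for every v > 0 and w ∈ ℝ: (i) the directional derivative of λ₁(·,·,t) in the direction r₁ = (1,0) equals −Aγ(γ+1)v^{γ−1}e^{k(γ+1)t}e^{(η−k)t} and is nonzero (genuine nonlinearity of the 1-family); (ii) the directional derivative of λ₂(·,·,t) in the direction r₂ = (1, Aγ v^{γ−1} e^{k(γ+1)t}) equals 0, i.e. ∂λ₂/∂v + Aγ v^{γ−1} e^{k(γ+1)t} · ∂λ₂/∂w = 0 (linear degeneracy of the 2-family). -/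
/-!
For fixed `t` both speeds are affine in `w` and in `v ^ γ`, so the partial derivatives follow from
`d/dv v ^ γ = γ * v ^ (γ - 1)` for `v > 0`. The derivative of `λ₁` is a product of nonzero factors
because `A`, `γ` and `γ + 1` are nonzero and powers of `v` and exponentials are positive. For `λ₂`,
`∂λ₂/∂w = e^{(η-k)t}`, and the two terms of the directional derivative cancel.
-/

/-- Characteristic speed λ₁ of the transformed Keyfitz–Kranzer system (case η ≠ k). -/
noncomputable def lambda1 (A γ k η β : ℝ) (v w t : ℝ) : ℝ :=
  -β / (η - k) +
    (w + β / (η - k) - A * (γ + 1) * v ^ γ * Real.exp (k * (γ + 1) * t)) *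
      Real.exp ((η - k) * t)

/-- Characteristic speed λ₂ of the transformed Keyfitz–Kranzer system (case η ≠ k). -/
noncomputable def lambda2 (A γ k η β : ℝ) (v w t : ℝ) : ℝ :=
  -β / (η - k) +
    (w + β / (η - k) - A * v ^ γ * Real.exp (k * (γ + 1) * t)) *
      Real.exp ((η - k) * t)

/-- the 1-family is genuinely nonlinear: the directional derivative of λ₁ in
the direction r₁=(1,0) (i.e. ∂λ₁/∂v) equals −Aγ(γ+1)v^{γ−1}e^{k(γ+1)t}e^{(η−k)t} ≠ 0;
the 2-family is linearly degenerate: ∂λ₂/∂v + Aγ v^{γ−1} e^{k(γ+1)t} ∂λ₂/∂w = 0. -/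
theorem genuine_nonlinearity_and_linear_degeneracy
    (A γ k η β t : ℝ) (hA : A < 0) (hγ : γ < 0) (hγ1 : γ ≠ -1) (hηk : η ≠ k) :
    ∀ v : ℝ, 0 < v → ∀ w : ℝ,
      (deriv (fun x : ℝ => lambda1 A γ k η β x w t) v =
          -A * γ * (γ + 1) * v ^ (γ - 1) * Real.exp (k * (γ + 1) * t) *
            Real.exp ((η - k) * t) ∧
        -A * γ * (γ + 1) * v ^ (γ - 1) * Real.exp (k * (γ + 1) * t) *
            Real.exp ((η - k) * t) ≠ 0) ∧
      deriv (fun x : ℝ => lambda2 A γ k η β x w t) v +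
          A * γ * v ^ (γ - 1) * Real.exp (k * (γ + 1) * t) *
            deriv (fun y : ℝ => lambda2 A γ k η β v y t) w = 0 := by
  intro v hv w
  have hpow : HasDerivAt (fun x : ℝ => x ^ γ) (γ * v ^ (γ - 1)) v :=
    Real.hasDerivAt_rpow_const (Or.inl (ne_of_gt hv))
  -- Both speeds, as functions of `v`, have the form `a + (b - c * v ^ γ * d) * e`.
  have hv_deriv (a b c d e : ℝ) :
      deriv (fun x : ℝ => a + (b - c * x ^ γ * d) * e) v =
        -(c * (γ * v ^ (γ - 1)) * d) * e :=
    (((((hpow.const_mul c).mul_const d).const_sub b).mul_const e).const_add a).deriv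
  have hw_deriv (a b c e : ℝ) :
      deriv (fun y : ℝ => a + (y + b - c) * e) w = 1 * e :=
    (((((hasDerivAt_id w).add_const b).sub_const c).mul_const e).const_add a).deriv
  refine ⟨⟨?_, ?_⟩, ?_⟩
  · simp only [lambda1]
    rw [hv_deriv]
    ring
  · have hγ1' : γ + 1 ≠ 0 := fun h => hγ1 (by linarith)
    have hvp : v ^ (γ - 1) ≠ 0 := (Real.rpow_pos_of_pos hv _).ne'
    have hA' : -A ≠ 0 := neg_ne_zero.mpr hA.ne
    exact mul_ne_zero (mul_ne_zero (mul_ne_zero (mul_ne_zero (mul_ne_zero hA' hγ.ne) hγ1') hvp)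
      (Real.exp_ne_zero _)) (Real.exp_ne_zero _)
  · simp only [lambda2]
    rw [hv_deriv, hw_deriv]
    ring
end

section
/- Let A, γ, k, β be real constants and fix t ∈ ℝ. Let H, G : ℝ × ℝ → ℝ² be given on {v > 0} by H(v,w) = (v, vw) and G(v,w) = (v(w+βt) − A v^{γ+1} e^{k(γ+1)t}, vw(w+βt) − A w v^{γ+1} e^{k(γ+1)t}). Then at every point (v,w) with v > 0, the Jacobian matrices DH and DG satisfy det(DG − μ₁ DH) = 0 and det(DG − μ₂ DH) = 0, and (DG − μ₁ DH)·(1,0)ᵀ = 0 and (DG − μ₂ DH)·(1, Aγ v^{γ−1} e^{k(γ+1)t})ᵀ = 0, where μ₁ = (w + βt) − A(γ+1)v^γ e^{k(γ+1)t} and μ₂ = (w + βt) − A v^γ e^{k(γ+1)t}. -/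
/-!
The entries of `DH` and `DG` are partial derivatives, computed by restricting `H` and `G` to the
coordinate lines through `(v, w)` (`hasDerivAt_fst`, `hasDerivAt_snd`) and using uniqueness of
one-variable derivatives. With `v ^ (γ + 1) = v ^ γ * v` and `v ^ γ = v ^ (γ - 1) * v`, the two
eigenvector equations become polynomial identities, and the determinants vanish because each
pencil `DG - μᵢ DH` has a nonzero kernel vector.
-/

/-- Conserved quantity H of the transformed system in the case η = k, on states p = (v, w). -/
noncomputable def HmapEq (β t : ℝ) (p : Fin 2 → ℝ) : Fin 2 → ℝ :=
  ![p 0, p 0 * p 1]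

/-- Flux G of the transformed system in the case η = k at time t, on states p = (v, w). -/
noncomputable def GmapEq (A γ k β t : ℝ) (p : Fin 2 → ℝ) : Fin 2 → ℝ :=
  ![p 0 * (p 1 + β * t) - A * p 0 ^ (γ + 1) * Real.exp (k * (γ + 1) * t),
    p 0 * p 1 * (p 1 + β * t) - A * p 1 * p 0 ^ (γ + 1) * Real.exp (k * (γ + 1) * t)]

lemma hasDerivAt_fst {F : (Fin 2 → ℝ) → Fin 2 → ℝ} {M : Matrix (Fin 2) (Fin 2) ℝ} {v w : ℝ}
    (h : HasFDerivAt F (LinearMap.toContinuousLinearMap M.mulVecLin) ![v, w]) (i : Fin 2) :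
    HasDerivAt (fun x => F ![x, w] i) (M i 0) v := by
  have hline : HasDerivAt (fun x : ℝ => ![x, w]) ![1, 0] v := by
    rw [hasDerivAt_pi]
    intro j
    fin_cases j
    · exact hasDerivAt_id v
    · exact hasDerivAt_const v w
  have hcomp := hasDerivAt_pi.1 (HasFDerivAt.comp_hasDerivAt (f := fun x : ℝ => ![x, w]) v h hline) i
  simpa [Matrix.mulVec, dotProduct, Function.comp_def] using hcomp

lemma hasDerivAt_snd {F : (Fin 2 → ℝ) → Fin 2 → ℝ} {M : Matrix (Fin 2) (Fin 2) ℝ} {v w : ℝ}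
    (h : HasFDerivAt F (LinearMap.toContinuousLinearMap M.mulVecLin) ![v, w]) (i : Fin 2) :
    HasDerivAt (fun y => F ![v, y] i) (M i 1) w := by
  have hline : HasDerivAt (fun y : ℝ => ![v, y]) ![0, 1] w := by
    rw [hasDerivAt_pi]
    intro j
    fin_cases j
    · exact hasDerivAt_const w v
    · exact hasDerivAt_id w
  have hcomp := hasDerivAt_pi.1 (HasFDerivAt.comp_hasDerivAt (f := fun y : ℝ => ![v, y]) w h hline) i
  simpa [Matrix.mulVec, dotProduct, Function.comp_def] using hcomp

lemma det_eq_zero_of_kernel {M : Matrix (Fin 2) (Fin 2) ℝ} {r : ℝ}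
    (h : M.mulVec ![1, r] = 0) : M.det = 0 :=
  Matrix.exists_mulVec_eq_zero_iff.1 ⟨![1, r], fun h0 => one_ne_zero (congrFun h0 0), h⟩

/-- in the case η = k, at every point with v > 0 the Jacobian matrices DH
and DG satisfy det(DG − μᵢ DH) = 0 for i = 1,2, with eigenvectors (1,0)ᵀ for μ₁ and
(1, Aγ v^{γ−1} e^{k(γ+1)t})ᵀ for μ₂. -/
theorem jacobian_eigenstructure_eta_eq_k
    (A γ k β t : ℝ) (v w : ℝ) (hv : 0 < v)
    (mu1 mu2 : ℝ)
    (hmu1 : mu1 = (w + β * t) - A * (γ + 1) * v ^ γ * Real.exp (k * (γ + 1) * t))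
    (hmu2 : mu2 = (w + β * t) - A * v ^ γ * Real.exp (k * (γ + 1) * t))
    (DH DG : Matrix (Fin 2) (Fin 2) ℝ)
    (hDH : HasFDerivAt (HmapEq β t)
      (LinearMap.toContinuousLinearMap DH.mulVecLin) ![v, w])
    (hDG : HasFDerivAt (GmapEq A γ k β t)
      (LinearMap.toContinuousLinearMap DG.mulVecLin) ![v, w]) :
    (DG - mu1 • DH).det = 0 ∧ (DG - mu2 • DH).det = 0 ∧
    (DG - mu1 • DH).mulVec ![1, 0] = 0 ∧
    (DG - mu2 • DH).mulVec ![1, A * γ * v ^ (γ - 1) * Real.exp (k * (γ + 1) * t)] = 0 := by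
  set E := Real.exp (k * (γ + 1) * t)
  have hpow : HasDerivAt (fun x : ℝ => x ^ (γ + 1)) ((γ + 1) * v ^ γ) v := by
    simpa using Real.hasDerivAt_rpow_const (x := v) (p := γ + 1) (Or.inl hv.ne')
  have hv1 : v ^ (γ + 1) = v ^ γ * v := by rw [Real.rpow_add hv, Real.rpow_one]
  have hv2 : v ^ γ = v ^ (γ - 1) * v := by
    rw [Real.rpow_sub_one hv.ne', div_mul_cancel₀ _ hv.ne']
  have idv := hasDerivAt_id' v
  have idw := hasDerivAt_id' w
  have H00 : DH 0 0 = 1 := (hasDerivAt_fst hDH 0).unique idv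
  have H01 : DH 0 1 = 0 := (hasDerivAt_snd hDH 0).unique (hasDerivAt_const w v)
  have H10 : DH 1 0 = 1 * w := (hasDerivAt_fst hDH 1).unique (idv.mul_const w)
  have H11 : DH 1 1 = v * 1 := (hasDerivAt_snd hDH 1).unique (idw.const_mul v)
  have G00 : DG 0 0 = 1 * (w + β * t) - A * ((γ + 1) * v ^ γ) * E :=
    (hasDerivAt_fst hDG 0).unique
      ((idv.mul_const (w + β * t)).sub ((hpow.const_mul A).mul_const E))
  have G01 : DG 0 1 = v * 1 :=
    (hasDerivAt_snd hDG 0).unique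
      (((idw.add_const (β * t)).const_mul v).sub_const (A * v ^ (γ + 1) * E))
  have G10 : DG 1 0 = 1 * w * (w + β * t) - A * w * ((γ + 1) * v ^ γ) * E :=
    (hasDerivAt_fst hDG 1).unique
      (((idv.mul_const w).mul_const (w + β * t)).sub ((hpow.const_mul (A * w)).mul_const E))
  have G11 : DG 1 1 = v * 1 * (w + β * t) + v * w * 1 - A * 1 * v ^ (γ + 1) * E :=
    (hasDerivAt_snd hDG 1).unique
      (((idw.const_mul v).mul (idw.add_const (β * t))).sub
        (((idw.const_mul A).mul_const (v ^ (γ + 1))).mul_const E))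
  have K1 : (DG - mu1 • DH).mulVec ![1, 0] = 0 := by
    ext i
    fin_cases i
    · simp [Matrix.mulVec, dotProduct, G00, H00, hmu1]
      ring
    · simp [Matrix.mulVec, dotProduct, G10, H10, hmu1]
      ring
  have K2 : (DG - mu2 • DH).mulVec ![1, A * γ * v ^ (γ - 1) * E] = 0 := by
    ext i
    fin_cases i
    · simp [Matrix.mulVec, dotProduct, G00, H00, G01, H01, hmu2]
      rw [hv2]
      ring
    · simp [Matrix.mulVec, dotProduct, G10, H10, G11, H11, hmu2]
      rw [hv1, hv2]
      ring
  exact ⟨det_eq_zero_of_kernel K1, det_eq_zero_of_kernel K2, K1, K2⟩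
end

section
/- Let A, γ, k ∈ ℝ with m := k(γ+1) ≠ 0, let ρ > 0 and u_L, u_R ∈ ℝ. Define, for t > 0, g(t) = ((u_L+u_R)/2)·t − (Aρ^γ/m)·((e^{mt} − 1)/(mt) − 1) and ω_δ(t) = (u_L+u_R)/2 − (ρ^γ A)(m t e^{mt} − e^{mt} + 1)/(t² m²). Then for every t > 0, g is differentiable at t with g′(t) = ω_δ(t), and g satisfies the delta-shock ODE of the η = k case with ρ_L = ρ_R = ρ: −(ρ − ρ)g′(t)g(t) + g′(t)·( (ρu_L − ρu_R)t − A((e^{mt} − 1)/m)(ρ^{γ+1} − ρ^{γ+1}) ) + (ρu_L − ρu_R)g(t) − (ρu_L² − ρu_R²)t + A((e^{mt} − 1)/m)(ρ^{γ+1}u_L − ρ^{γ+1}u_R) = 0. -/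
/-!
With equal densities the ODE says, up to the factor `ρ * (uL - uR)`, that the derivative of `t * g t`
is `(uL + uR) * t - A * ρ ^ γ * (exp (m * t) - 1) / m`, where `m = k * (γ + 1)`. The stated `g` is the integral of that
function over `[0, t]`, divided by `t`. Hence the derivative is a quotient-rule computation and
the ODE a rational identity in `t`, `m` and `exp (m * t)`, using `ρ ^ (γ + 1) = ρ ^ γ * ρ`.
-/

/-- explicit solution of the delta-shock ODE in the case η = k with
ρ_L = ρ_R = ρ. With m = k(γ+1) ≠ 0,
g(t) = ((u_L+u_R)/2)t − (Aρ^γ/m)((e^{mt} − 1)/(mt) − 1) and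
ω_δ(t) = (u_L+u_R)/2 − Aρ^γ (mte^{mt} − e^{mt} + 1)/(t²m²), one has g′ = ω_δ on t > 0
and g satisfies the delta-shock ODE. -/
theorem delta_shock_ode_solution_equal_densities
    (A γ k : ℝ) (hm : k * (γ + 1) ≠ 0)
    (ρ : ℝ) (hρ : 0 < ρ) (uL uR : ℝ) :
    ∀ t : ℝ, 0 < t →
      HasDerivAt
        (fun s : ℝ => ((uL + uR) / 2) * s
          - (A * ρ ^ γ / (k * (γ + 1))) *
              ((Real.exp (k * (γ + 1) * s) - 1) / (k * (γ + 1) * s) - 1))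
        ((uL + uR) / 2
          - (ρ ^ γ * A) *
              (k * (γ + 1) * t * Real.exp (k * (γ + 1) * t)
                - Real.exp (k * (γ + 1) * t) + 1) / (t ^ 2 * (k * (γ + 1)) ^ 2)) t ∧
      -(ρ - ρ) *
          ((uL + uR) / 2
            - (ρ ^ γ * A) *
                (k * (γ + 1) * t * Real.exp (k * (γ + 1) * t)
                  - Real.exp (k * (γ + 1) * t) + 1) / (t ^ 2 * (k * (γ + 1)) ^ 2)) *
          (((uL + uR) / 2) * t
            - (A * ρ ^ γ / (k * (γ + 1))) *
                ((Real.exp (k * (γ + 1) * t) - 1) / (k * (γ + 1) * t) - 1))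
        + ((uL + uR) / 2
            - (ρ ^ γ * A) *
                (k * (γ + 1) * t * Real.exp (k * (γ + 1) * t)
                  - Real.exp (k * (γ + 1) * t) + 1) / (t ^ 2 * (k * (γ + 1)) ^ 2)) *
            ((ρ * uL - ρ * uR) * t
              - A * ((Real.exp (k * (γ + 1) * t) - 1) / (k * (γ + 1))) *
                  (ρ ^ (γ + 1) - ρ ^ (γ + 1)))
        + (ρ * uL - ρ * uR) *
            (((uL + uR) / 2) * t
              - (A * ρ ^ γ / (k * (γ + 1))) *
                  ((Real.exp (k * (γ + 1) * t) - 1) / (k * (γ + 1) * t) - 1))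
        - (ρ * uL ^ 2 - ρ * uR ^ 2) * t
        + A * ((Real.exp (k * (γ + 1) * t) - 1) / (k * (γ + 1))) *
            (ρ ^ (γ + 1) * uL - ρ ^ (γ + 1) * uR) = 0 := by
  intro t ht
  rw [Real.rpow_add_one hρ.ne']
  generalize k * (γ + 1) = m at hm ⊢
  have ht' : t ≠ 0 := ht.ne'
  refine ⟨?_, ?_⟩
  · have hlin : HasDerivAt (fun s : ℝ => m * s) m t := by
      simpa using (hasDerivAt_id t).const_mul m
    have hmain := ((hasDerivAt_id t).const_mul ((uL + uR) / 2)).sub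
      ((((hlin.exp.sub_const 1).div hlin (mul_ne_zero hm ht')).sub_const 1).const_mul
        (A * ρ ^ γ / m))
    refine hmain.congr_deriv ?_
    field_simp
    ring
  · field_simp
    ring
end

section
/- Let A, γ, k, η, β be real with η ≠ k and γ ≠ −1. Suppose v, w : ℝ × ℝ → ℝ are differentiable with v(x,t) > 0 for all (x,t), and suppose that for all (x,t) the conservation laws hold pointwise: ∂ₜ v + ∂ₓ[ v e^{(η−k)t}(w + β/(η−k)) − v β/(η−k) − A v^{γ+1} e^{k(γ+1)t} e^{(η−k)t} ] = 0 and ∂ₜ[ v(w + β/(η−k)) ] + ∂ₓ[ v(w+β/(η−k))² e^{(η−k)t} − (w+β/(η−k)) e^{(η−k)t} A v^{γ+1} e^{k(γ+1)t} − (β/(η−k))(w+β/(η−k))v ] = 0, where ∂ₜ, ∂ₓ are the partial derivatives of the indicated composite functions of (x,t). Define ρ(x,t) = v(x,t)e^{kt} and u(x,t) = (w(x,t) + β/(η−k))e^{(η−k)t} − β/(η−k). Then for all (x,t): ∂ₜ ρ + ∂ₓ[ ρ(u − Aρ^γ e^{ηt}) ] = kρ and ∂ₜ(ρu) + ∂ₓ[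 ρu(u − Aρ^γ e^{ηt}) ] = ηρu + βρ. -/
/-!
With `c = β / (η - k)` and `W = w + c`, let `F₁`, `F₂` be the fluxes of the conservative system.
Positivity of `v` gives `(v e^{kt})^γ = v^γ e^{kγt}` and `v^{γ+1} = v^γ v`, so that

* `ρ (u - p) = e^{kt} F₁`,
* `ρ u = e^{ηt} (v W) - c e^{kt} v` and `ρ u (u - p) = e^{ηt} F₂ - c e^{kt} F₁`.

At fixed `t` the exponential factors are constants, so both balance laws are linear combinations
of the conservation laws; the sources arise from the time derivatives of the exponentials, and
`β = c (η - k)`. The algebra is in `flux_one_eq` and `flux_two_eq`.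
-/

/-- Partial derivative with respect to the spatial variable x (first coordinate). -/
noncomputable def pdx (f : ℝ × ℝ → ℝ) (x t : ℝ) : ℝ :=
  deriv (fun y => f (y, t)) x

/-- Partial derivative with respect to the time variable t (second coordinate). -/
noncomputable def pdt (f : ℝ × ℝ → ℝ) (x t : ℝ) : ℝ :=
  deriv (fun τ => f (x, τ)) t

/-- The pointwise identity `ρ (u - p) = e^{kt} F₁`. -/
lemma flux_one_eq (A γ k η β a b t : ℝ) (ha : 0 < a) :
    (a * Real.exp (k * t)) * ((b * Real.exp ((η - k) * t) - β / (η - k))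
        - A * (a * Real.exp (k * t)) ^ γ * Real.exp (η * t)) =
      Real.exp (k * t) * (a * Real.exp ((η - k) * t) * b - a * β / (η - k)
        - A * a ^ (γ + 1) * Real.exp (k * (γ + 1) * t) * Real.exp ((η - k) * t)) := by
  have hp : (a * Real.exp (k * t)) ^ γ = a ^ γ * Real.exp (k * γ * t) := by
    rw [Real.mul_rpow ha.le (Real.exp_pos _).le, ← Real.exp_mul]
    ring_nf
  have he : Real.exp (k * (γ + 1) * t) * Real.exp ((η - k) * t)
      = Real.exp (k * γ * t) * Real.exp (η * t) := by
    rw [← Real.exp_add, ← Real.exp_add]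
    ring_nf
  rw [hp, Real.rpow_add_one ha.ne']
  linear_combination (A * a ^ γ * a * Real.exp (k * t)) * he

/-- The pointwise identity `ρ u (u - p) = e^{ηt} F₂ - c e^{kt} F₁`. -/
lemma flux_two_eq (A γ k η β a b t : ℝ) (ha : 0 < a) :
    (a * Real.exp (k * t)) * (b * Real.exp ((η - k) * t) - β / (η - k)) *
        ((b * Real.exp ((η - k) * t) - β / (η - k))
          - A * (a * Real.exp (k * t)) ^ γ * Real.exp (η * t)) =
      Real.exp (η * t) * (a * b ^ (2 : ℕ) * Real.exp ((η - k) * t)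
        - b * Real.exp ((η - k) * t) * A * a ^ (γ + 1) * Real.exp (k * (γ + 1) * t)
        - (β / (η - k)) * b * a)
      - β / (η - k) * Real.exp (k * t) * (a * Real.exp ((η - k) * t) * b - a * β / (η - k)
        - A * a ^ (γ + 1) * Real.exp (k * (γ + 1) * t) * Real.exp ((η - k) * t)) := by
  have he : Real.exp (η * t) = Real.exp (k * t) * Real.exp ((η - k) * t) := by
    rw [← Real.exp_add]
    ring_nf
  have h := flux_one_eq A γ k η β a b t ha
  rw [he] at h ⊢
  linear_combination (b * Real.exp ((η - k) * t) - β / (η - k)) * h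

lemma hasDerivAt_exp_const_mul (a t : ℝ) :
    HasDerivAt (fun τ => Real.exp (a * τ)) (a * Real.exp (a * t)) t := by
  simpa [mul_comm] using ((hasDerivAt_id t).const_mul a).exp

/-- case η ≠ k: if (v, w) is a differentiable pointwise solution of the
transformed conservative system, then ρ = v e^{kt},
u = (w + β/(η−k))e^{(η−k)t} − β/(η−k) is a pointwise solution of the original balance
laws ρ_t + (ρ(u − Aρ^γ e^{ηt}))_x = kρ and (ρu)_t + (ρu(u − Aρ^γ e^{ηt}))_x = ηρu + βρ. -/
theorem transformation_back_to_balance_laws_eta_ne_k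
    (A γ k η β : ℝ) (hηk : η ≠ k) (hγ : γ ≠ -1)
    (v w : ℝ × ℝ → ℝ)
    (hv : Differentiable ℝ v) (hw : Differentiable ℝ w)
    (hvpos : ∀ p : ℝ × ℝ, 0 < v p)
    (h1 : ∀ x t : ℝ,
      pdt v x t +
        pdx (fun p => v p * Real.exp ((η - k) * p.2) * (w p + β / (η - k))
          - v p * β / (η - k)
          - A * (v p) ^ (γ + 1) * Real.exp (k * (γ + 1) * p.2) *
              Real.exp ((η - k) * p.2)) x t = 0)
    (h2 : ∀ x t : ℝ,
      pdt (fun p => v p * (w p + β / (η - k))) x t +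
        pdx (fun p => v p * (w p + β / (η - k)) ^ (2 : ℕ) * Real.exp ((η - k) * p.2)
          - (w p + β / (η - k)) * Real.exp ((η - k) * p.2) * A * (v p) ^ (γ + 1) *
              Real.exp (k * (γ + 1) * p.2)
          - (β / (η - k)) * (w p + β / (η - k)) * v p) x t = 0) :
    ∀ x t : ℝ,
      pdt (fun p => v p * Real.exp (k * p.2)) x t +
        pdx (fun p => (v p * Real.exp (k * p.2)) *
          (((w p + β / (η - k)) * Real.exp ((η - k) * p.2) - β / (η - k))
            - A * (v p * Real.exp (k * p.2)) ^ γ * Real.exp (η * p.2))) x t =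
        k * (v (x, t) * Real.exp (k * t)) ∧
      pdt (fun p => (v p * Real.exp (k * p.2)) *
            ((w p + β / (η - k)) * Real.exp ((η - k) * p.2) - β / (η - k))) x t +
        pdx (fun p => (v p * Real.exp (k * p.2)) *
          ((w p + β / (η - k)) * Real.exp ((η - k) * p.2) - β / (η - k)) *
          (((w p + β / (η - k)) * Real.exp ((η - k) * p.2) - β / (η - k))
            - A * (v p * Real.exp (k * p.2)) ^ γ * Real.exp (η * p.2))) x t =
        η * (v (x, t) * Real.exp (k * t)) *
            ((w (x, t) + β / (η - k)) * Real.exp ((η - k) * t) - β / (η - k))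
          + β * (v (x, t) * Real.exp (k * t)) := by
  intro x t
  have h1 := h1 x t
  have h2 := h2 x t
  have hηk' : η - k ≠ 0 := sub_ne_zero.mpr hηk
  have hβ : β = β / (η - k) * (η - k) := by field_simp
  -- Differentiability of the restrictions of `v` and `w` to the two coordinate lines.
  have hvx : Differentiable ℝ (fun y => v (y, t)) := by fun_prop
  have hwx : Differentiable ℝ (fun y => w (y, t)) := by fun_prop
  have hvt : DifferentiableAt ℝ (fun τ => v (x, τ)) t := by fun_prop
  have hwt : DifferentiableAt ℝ (fun τ => w (x, τ)) t := by fun_prop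
  have hpow : Differentiable ℝ (fun y => v (y, t) ^ (γ + 1)) :=
    hvx.rpow_const fun y => Or.inl (hvpos (y, t)).ne'
  simp only [pdx, pdt] at h1 h2 ⊢
  simp only [flux_one_eq A γ k η β _ _ _ (hvpos _), flux_two_eq A γ k η β _ _ _ (hvpos _)]
  set F₁ : ℝ → ℝ := fun y => v (y, t) * Real.exp ((η - k) * t) * (w (y, t) + β / (η - k))
      - v (y, t) * β / (η - k)
      - A * v (y, t) ^ (γ + 1) * Real.exp (k * (γ + 1) * t) * Real.exp ((η - k) * t) with hF₁
  set F₂ : ℝ → ℝ := fun y => v (y, t) * (w (y, t) + β / (η - k)) ^ (2 : ℕ)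
        * Real.exp ((η - k) * t)
      - (w (y, t) + β / (η - k)) * Real.exp ((η - k) * t) * A * v (y, t) ^ (γ + 1)
        * Real.exp (k * (γ + 1) * t)
      - (β / (η - k)) * (w (y, t) + β / (η - k)) * v (y, t) with hF₂
  have dF₁ : HasDerivAt F₁ (deriv F₁ x) x := by
    have : Differentiable ℝ F₁ := by
      simp only [hF₁, mul_div_assoc]
      fun_prop
    exact (this x).hasDerivAt
  have dF₂ : HasDerivAt F₂ (deriv F₂ x) x := by
    have : Differentiable ℝ F₂ := by
      simp only [hF₂]
      fun_prop
    exact (this x).hasDerivAt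
  have dv := hvt.hasDerivAt
  have dvW := (hvt.mul (hwt.add_const (β / (η - k)))).hasDerivAt
  have dk := hasDerivAt_exp_const_mul k t
  have dη := hasDerivAt_exp_const_mul η t
  have e : Real.exp (η * t) = Real.exp (k * t) * Real.exp ((η - k) * t) := by
    rw [← Real.exp_add]
    ring_nf
  constructor
  · have hx := (dF₁.const_mul (Real.exp (k * t))).deriv
    have ht := (dv.mul dk).deriv
    refine (congrArg₂ (· + ·) ht hx).trans ?_
    linear_combination Real.exp (k * t) * h1
  · have hx := ((dF₂.const_mul (Real.exp (η * t))).sub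
      (dF₁.const_mul (β / (η - k) * Real.exp (k * t)))).deriv
    have hρu : (fun τ => v (x, τ) * Real.exp (k * τ) *
          ((w (x, τ) + β / (η - k)) * Real.exp ((η - k) * τ) - β / (η - k))) =
        fun τ => v (x, τ) * (w (x, τ) + β / (η - k)) * Real.exp (η * τ)
          - β / (η - k) * (v (x, τ) * Real.exp (k * τ)) := by
      funext τ
      have : Real.exp (η * τ) = Real.exp (k * τ) * Real.exp ((η - k) * τ) := by
        rw [← Real.exp_add]
        ring_nf
      rw [this]
      ring
    have ht := ((dvW.mul dη).sub ((dv.mul dk).const_mul (β / (η - k)))).deriv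
    rw [hρu]
    refine (congrArg₂ (· + ·) ht hx).trans ?_
    change deriv ((fun τ => v (x, τ)) * fun τ => w (x, τ) + β / (η - k)) t + deriv F₂ x = 0 at h2
    simp only [Pi.mul_apply]
    linear_combination Real.exp (η * t) * h2 - β / (η - k) * Real.exp (k * t) * h1
      + η * v (x, t) * (w (x, t) + β / (η - k)) * e - v (x, t) * Real.exp (k * t) * hβ
end
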